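/- Let G be a finite group and u a central element of G with u² = 1. For every virtual character χ of G over ℂ (i.e. a difference χ_V − χ_W of characters of two finite-dimensional complex representations of G) and every integer k ≥ 1, the function G → ℂ given by g ↦ χ(u^{k+1}·g^k) is again a virtual character of G. -/

import Mathlib

open Finset

theorem adams_pow_apply {n : Type} [Fintype n] [DecidableEq n] (A : Matrix n n ℂ) (m : ℕ) (i j : n) :
    (A ^ (m+1)) i j = ∑ I : Fin m → n, ∏ a : Fin (m+1),
      A ((Fin.cons i I : Fin (m+1) → n) a) ((Fin.snoc I j : Fin (m+1) → n) a) := by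
  induction m generalizing i with
  | zero => simp [Fin.snoc]
  | succ m ih =>
    rw [pow_succ', Matrix.mul_apply, ← (Fin.consEquiv (fun _ : Fin (m+1) => n)).sum_comp,
      Fintype.sum_prod_type]
    refine Finset.sum_congr rfl fun x _ => ?_
    rw [ih, Finset.mul_sum]
    refine Finset.sum_congr rfl fun I _ => ?_
    rw [Fin.prod_univ_succ (n := m+1)]
    simp [Fin.consEquiv, ← Fin.cons_snoc_eq_snoc_cons]

theorem adams_trace_pow {n : Type} [Fintype n] [DecidableEq n] (A : Matrix n n ℂ) (m : ℕ) :
    (A ^ (m+1)).trace = ∑ I : Fin (m+1) → n, ∏ a : Fin (m+1), A (I a) (I (a+1)) := by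
  rw [← (Fin.consEquiv (fun _ : Fin (m+1) => n)).sum_comp,
      Fintype.sum_prod_type]
  simp only [Matrix.trace, Matrix.diag_apply]
  refine Finset.sum_congr rfl fun x _ => ?_
  rw [adams_pow_apply]
  refine Finset.sum_congr rfl fun I _ => Finset.prod_congr rfl fun a _ => ?_
  congr 1
  refine Fin.lastCases ?_ (fun a => ?_) a
  · simp [Fin.consEquiv]
  · simp [Fin.consEquiv]

/-- Kronecker power -/
def adamsT {n : Type} (ι : Type) [Fintype ι] (A : Matrix n n ℂ) : Matrix (ι → n) (ι → n) ℂ :=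
  fun I J => ∏ a, A (I a) (J a)

theorem adamsT_mul {n ι : Type} [Fintype n] [Fintype ι] [DecidableEq ι] (A B : Matrix n n ℂ) :
    adamsT ι (A * B) = adamsT ι A * adamsT ι B := by
  ext I J
  simp only [adamsT, Matrix.mul_apply, Finset.prod_univ_sum, Fintype.piFinset_univ,
    Finset.prod_mul_distrib]

theorem adamsT_one {n ι : Type} [Fintype n] [DecidableEq n] [Fintype ι] [DecidableEq ι] :
    adamsT ι (1 : Matrix n n ℂ) = 1 := by
  ext I J
  simp only [adamsT, Matrix.one_apply, funext_iff]
  rw [Finset.prod_ite_zero]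
  simp

/-- shift -/
def adamsC {n : Type} [DecidableEq n] (p : ℕ) [NeZero p] (j : ZMod p) :
    Matrix (ZMod p → n) (ZMod p → n) ℂ :=
  fun I J => if I = fun a => J (a + j) then 1 else 0

theorem adamsC_mul {n : Type} [Fintype n] [DecidableEq n] (p : ℕ) [NeZero p] (i j : ZMod p) :
    adamsC (n := n) p i * adamsC p j = adamsC p (i + j) := by
  ext I J
  simp only [Matrix.mul_apply, adamsC]
  simp [add_assoc]

theorem adamsC_zero {n : Type} [Fintype n] [DecidableEq n] (p : ℕ) [NeZero p] :
    adamsC (n := n) p 0 = 1 := by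
  ext I J
  simp [adamsC, Matrix.one_apply]

theorem adamsT_comm {n : Type} [Fintype n] [DecidableEq n] (p : ℕ) [NeZero p] (j : ZMod p)
    (A : Matrix n n ℂ) : adamsT (ZMod p) A * adamsC p j = adamsC p j * adamsT (ZMod p) A := by
  ext I J
  simp only [Matrix.mul_apply, adamsC]
  have : ∀ x : ZMod p → n, (I = fun a => x (a + j)) ↔ x = fun a => I (a - j) := by
    intro x
    constructor
    · rintro rfl; simp
    · rintro rfl; simp
  simp only [this, mul_ite, mul_one, mul_zero, ite_mul, one_mul, zero_mul, Finset.sum_ite_eq',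
    Finset.mem_univ, if_true]
  simp only [adamsT]
  rw [← (Equiv.subRight j).prod_comp]
  simp

theorem adams_trace_TC {n : Type} [Fintype n] [DecidableEq n] (p : ℕ) [Fact p.Prime] (j : ZMod p)
    (hj : j ≠ 0) (A : Matrix n n ℂ) : (adamsT (ZMod p) A * adamsC p j).trace = (A ^ p).trace := by
  have h1 : (adamsT (ZMod p) A * adamsC p j).trace =
      ∑ I : ZMod p → n, ∏ a, A (I a) (I (a + j)) := by
    simp [Matrix.trace, Matrix.mul_apply, adamsC, adamsT]
  have h2 : ∑ I : ZMod p → n, ∏ a, A (I a) (I (a + j)) =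
      ∑ I : ZMod p → n, ∏ a, A (I a) (I (a + 1)) := by
    rw [← ((Equiv.mulRight₀ j hj).arrowCongr (Equiv.refl n)).sum_comp]
    refine Finset.sum_congr rfl fun I _ => ?_
    rw [← Equiv.prod_comp (Equiv.mulRight₀ j hj)]
    refine Finset.prod_congr rfl fun a _ => ?_
    simp [Equiv.arrowCongr, add_mul, hj]
  rw [h1, h2]
  clear h1 h2 hj j
  obtain ⟨m, rfl⟩ : ∃ m, p = m + 1 := ⟨p - 1, by have := (Fact.out : p.Prime).pos; omega⟩
  exact (adams_trace_pow A m).symm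

/-- projector -/
noncomputable def adamsP {n : Type} [DecidableEq n] (p : ℕ) [NeZero p] (ψ : AddChar (ZMod p) ℂ) :
    Matrix (ZMod p → n) (ZMod p → n) ℂ := (p : ℂ)⁻¹ • ∑ j, ψ j • adamsC p j

theorem adamsP_idem {n : Type} [Fintype n] [DecidableEq n] (p : ℕ) [NeZero p] (ψ : AddChar (ZMod p) ℂ) :
    adamsP (n := n) p ψ * adamsP p ψ = adamsP p ψ := by
  have h : (∑ j, ψ j • adamsC (n := n) p j) * (∑ j, ψ j • adamsC p j) =
      (p : ℂ) • ∑ j, ψ j • adamsC p j := by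
    rw [Finset.sum_mul_sum]
    have : ∀ i : ZMod p, ∑ j, (ψ i • adamsC (n := n) p i) * (ψ j • adamsC p j)
        = ∑ j, ψ j • adamsC p j := by
      intro i
      refine Eq.trans ?_ (Equiv.sum_comp (Equiv.addLeft i) (fun j => ψ j • adamsC (n := n) p j))
      refine Finset.sum_congr rfl fun j _ => ?_
      simp [adamsC_mul, AddChar.map_add_eq_mul, smul_smul, mul_comm]
    rw [Finset.sum_congr rfl fun i _ => this i]
    simp [← Nat.cast_smul_eq_nsmul ℂ]
  have hp : (p : ℂ) ≠ 0 := by simp [NeZero.ne]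
  rw [adamsP, smul_mul_smul_comm, h, smul_smul]
  congr 1
  field_simp

theorem adamsP_comm {n : Type} [Fintype n] [DecidableEq n] (p : ℕ) [NeZero p] (ψ : AddChar (ZMod p) ℂ)
    (A : Matrix n n ℂ) : adamsT (ZMod p) A * adamsP p ψ = adamsP p ψ * adamsT (ZMod p) A := by
  simp [adamsP, Finset.mul_sum, Finset.sum_mul, adamsT_comm]

theorem adamsP_trace {n : Type} [Fintype n] [DecidableEq n] (p : ℕ) [Fact p.Prime]
    (A : Matrix n n ℂ) : (A ^ p).trace = (adamsT (ZMod p) A * adamsP p 1).trace -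
      (adamsT (ZMod p) A * adamsP p ZMod.stdAddChar).trace := by
  have hp : (p : ℂ) ≠ 0 := by simp [NeZero.ne]
  have h0 : ∑ j : ZMod p, (ZMod.stdAddChar j : ℂ) = 0 := by
    apply AddChar.sum_eq_zero_of_ne_one
    have := ZMod.isPrimitive_stdAddChar p (one_ne_zero)
    simpa using this
  have h : ∀ ψ : AddChar (ZMod p) ℂ, (adamsT (ZMod p) A * adamsP p ψ).trace =
      (p : ℂ)⁻¹ * ∑ j, ψ j * (adamsT (ZMod p) A * adamsC p j).trace := by
    intro ψ
    simp [adamsP, Finset.mul_sum, Matrix.trace_sum, Matrix.trace_smul]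
  rw [h, h, ← mul_sub, ← Finset.sum_sub_distrib]
  have : ∀ j : ZMod p, (1 : AddChar (ZMod p) ℂ) j * (adamsT (ZMod p) A * adamsC p j).trace -
     ZMod.stdAddChar j * (adamsT (ZMod p) A * adamsC p j).trace =
     (1 - ZMod.stdAddChar j) * (A ^ p).trace := by
    intro j
    by_cases hj : j = 0
    · subst hj; simp
    · rw [adams_trace_TC p j hj]; simp [sub_mul]
  simp only [this]
  rw [← Finset.sum_mul, Finset.sum_sub_distrib, h0]
  simp [ZMod.card]
  field_simp

/-- virtual characters -/
def AdamsVirt {G : Type} [Group G] (f : G → ℂ) : Prop :=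
  ∃ V W : FDRep ℂ G, ∀ g, f g = V.character g - W.character g

theorem AdamsVirt.sub {G : Type} [Group G] {f h : G → ℂ} (hf : AdamsVirt f) (hh : AdamsVirt h) :
    AdamsVirt (fun g => f g - h g) := by
  obtain ⟨V, W, hf⟩ := hf
  obtain ⟨V', W', hh⟩ := hh
  have key : ∀ (A B : FDRep ℂ G) (g : G),
      (FDRep.of (Representation.prod (V := A) (W := B) A.ρ B.ρ)).character g
        = A.character g + B.character g := fun A B g =>
    LinearMap.trace_prodMap' (A.ρ g) (B.ρ g)
  refine ⟨FDRep.of (Representation.prod (V := V) (W := W') V.ρ W'.ρ),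
    FDRep.of (Representation.prod (V := W) (W := V') W.ρ V'.ρ), fun g => ?_⟩
  rw [key, key]
  simp only [hf, hh]
  ring

theorem adams_proj {G : Type} [Group G] {M : Type} [AddCommGroup M] [Module ℂ M]
    [Module.Finite ℂ M] (ρ : Representation ℂ G M) (P : M →ₗ[ℂ] M) (hP : P * P = P)
    (hc : ∀ g, ρ g * P = P * ρ g) :
    ∃ V : FDRep ℂ G, ∀ g, V.character g = LinearMap.trace ℂ M (ρ g * P) := by
  have hle : ∀ g, LinearMap.range P ≤ (LinearMap.range P).comap (ρ g) := by
    rintro g _ ⟨x, rfl⟩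
    exact ⟨ρ g x, (LinearMap.congr_fun (hc g) x).symm⟩
  refine ⟨FDRep.of (ρ.subrepresentation (LinearMap.range P) hle), fun g => ?_⟩
  have hm : ∀ x, (ρ g * P) x ∈ LinearMap.range P := fun x => hle g ⟨x, rfl⟩
  rw [← LinearMap.trace_restrict_eq_of_forall_mem (LinearMap.range P) (ρ g * P) hm]
  change LinearMap.trace ℂ (LinearMap.range P) ((ρ g).restrict (hle g)) = _
  congr 1
  ext ⟨_, x, rfl⟩
  have := LinearMap.congr_fun hP x
  simp only [Module.End.mul_apply] at this
  simp [this]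

theorem adams_prime_char {G : Type} [Group G] (V : FDRep ℂ G) (p : ℕ) [Fact p.Prime] :
    AdamsVirt (fun g => V.character (g ^ p)) := by
  let b := Module.finBasis ℂ V
  let n := Fin (Module.finrank ℂ V)
  let A : G → Matrix n n ℂ := fun g => LinearMap.toMatrix b b (V.ρ g)
  let ρ : Representation ℂ G ((ZMod p → n) → ℂ) :=
    { toFun := fun g => Matrix.toLin' (adamsT (ZMod p) (A g))
      map_one' := by
        simp only [A, map_one, LinearMap.toMatrix_one, adamsT_one, Matrix.toLin'_one]; rfl
      map_mul' := fun g h => by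
        simp only [A, map_mul, LinearMap.toMatrix_mul, adamsT_mul, Matrix.toLin'_mul]; rfl }
  have H : ∀ ψ : AddChar (ZMod p) ℂ, ∃ V' : FDRep ℂ G, ∀ g,
      V'.character g = (adamsT (ZMod p) (A g) * adamsP p ψ).trace := by
    intro ψ
    obtain ⟨V', h⟩ := adams_proj ρ (Matrix.toLin' (adamsP p ψ))
      (by rw [Module.End.mul_eq_comp, ← Matrix.toLin'_mul, adamsP_idem])
      (fun g => by
        change Matrix.toLin' (adamsT (ZMod p) (A g)) * _ = _ * Matrix.toLin' (adamsT (ZMod p) (A g))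
        rw [Module.End.mul_eq_comp, Module.End.mul_eq_comp, ← Matrix.toLin'_mul,
          ← Matrix.toLin'_mul, adamsP_comm])
    refine ⟨V', fun g => ?_⟩
    rw [h]
    change LinearMap.trace ℂ _ (Matrix.toLin' (adamsT (ZMod p) (A g)) * _) = _
    rw [Module.End.mul_eq_comp, ← Matrix.toLin'_mul, Matrix.trace_toLin'_eq]
  obtain ⟨V₁, h₁⟩ := H 1
  obtain ⟨V₂, h₂⟩ := H ZMod.stdAddChar
  refine ⟨V₁, V₂, fun g => ?_⟩
  rw [h₁, h₂, ← adamsP_trace]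
  change LinearMap.trace ℂ V (V.ρ (g ^ p)) = _
  rw [map_pow, LinearMap.trace_eq_matrix_trace ℂ b,
    LinearMap.toMatrix_pow]

theorem AdamsVirt.pow {G : Type} [Group G] (k : ℕ) (hk : k ≠ 0) :
    ∀ f : G → ℂ, AdamsVirt f → AdamsVirt (fun g => f (g ^ k)) := by
  induction k using Nat.recOnMul with
  | zero => exact absurd rfl hk
  | one => intro f hf; simpa using hf
  | prime p hp =>
    rintro f ⟨V, W, h⟩
    have : Fact p.Prime := ⟨hp⟩
    simp only [h]
    exact (adams_prime_char V p).sub (adams_prime_char W p)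
  | mul a b ha hb =>
    intro f hf
    simp only [pow_mul]
    have ha0 : a ≠ 0 := by rintro rfl; simp at hk
    have hb0 : b ≠ 0 := by rintro rfl; simp at hk
    exact ha ha0 _ (hb hb0 f hf)

theorem adams_central_char {G : Type} [Group G] (u : G) (hu : ∀ g : G, u * g = g * u)
    (hu2 : u ^ 2 = 1) (V : FDRep ℂ G) : AdamsVirt (fun g => V.character (u * g)) := by
  have h2 : V.ρ u * V.ρ u = 1 := by rw [← map_mul, ← pow_two, hu2, map_one]
  have hcm : ∀ g, V.ρ g * V.ρ u = V.ρ u * V.ρ g := fun g => by rw [← map_mul, ← map_mul, hu]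
  have H : ∀ ε : ℂ, ε * ε = 1 → ∃ V' : FDRep ℂ G, ∀ g, V'.character g =
      LinearMap.trace ℂ V (V.ρ g * ((2 : ℂ)⁻¹ • (1 + ε • V.ρ u))) := by
    intro ε hε
    refine adams_proj V.ρ _ ?_ fun g => ?_
    · rw [smul_mul_smul_comm, add_mul, mul_add, mul_add, smul_mul_smul_comm, h2, hε]
      simp only [one_mul, mul_one, one_smul]
      module
    · simp [mul_add, add_mul, hcm]
  obtain ⟨V₁, h₁⟩ := H 1 (by ring)
  obtain ⟨V₂, h₂⟩ := H (-1) (by ring)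
  refine ⟨V₁, V₂, fun g => ?_⟩
  rw [h₁, h₂, ← map_sub, ← mul_sub]
  change LinearMap.trace ℂ V (V.ρ (u * g)) = _
  rw [hu, map_mul]
  congr 2
  module

theorem adams_operation_virtual_character {G : Type} [Group G] [Finite G]
    (u : G) (hu : ∀ g : G, u * g = g * u) (hu2 : u ^ 2 = 1)
    (V W : FDRep ℂ G) (k : ℕ) (hk : 1 ≤ k) :
    ∃ V' W' : FDRep ℂ G, ∀ g : G,
      V.character (u ^ (k + 1) * g ^ k) - W.character (u ^ (k + 1) * g ^ k) =
        V'.character g - W'.character g := by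
  have hv : u ^ (k + 1) * u ^ (k + 1) = 1 := by rw [← pow_two, pow_right_comm, hu2, one_pow]
  have hc : ∀ g : G, u ^ (k + 1) * g = g * u ^ (k + 1) := fun g =>
    ((show Commute u g from hu g).pow_left (k + 1))
  have h := (adams_central_char (u ^ (k + 1)) hc (by rw [pow_two, hv]) V).sub
    (adams_central_char (u ^ (k + 1)) hc (by rw [pow_two, hv]) W)
  exact AdamsVirt.pow k (by omega) _ h
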